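/- For the family of boundary-value-problem data given by p₁ = q₁ = 0, p₂ = p₂^β, q₂ = q₂^β, the characteristic functions are independent of β: for every β ∈ ℂ, every m ∈ {0,1} and every λ ∈ ℂ, Δ₁^m(λ) = sin(πλ) − (−1)^m ∫_{2a₁+a₂/2}^{π} h(x)·sin(λ(π − 2x + a₁)) dx and Δ₂^m(λ) = −cos(πλ) + (−1)^m ∫_{2a₁+a₂/2}^{π} h(x)·cos(λ(π − 2x + a₁)) dx. In particular, the zero sets of Δ₁^m and Δ₂^m (the spectra of the boundary value problems D_j(P_β, Q_β, m)) do not depend on β. -/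

import Mathlib

open MeasureTheory Real Set Filter

noncomputable def alpha1 (a₁ : ℝ) (f g : ℝ → ℂ) (x : ℝ) : ℂ :=
  ∫ t in (x + a₁)..π, f t * g (t - x)

noncomputable def alpha2 (a₂ : ℝ) (f g : ℝ → ℂ) (x : ℝ) : ℂ :=
  ∫ t in (x + a₂)..π, f t * g (t - x)

noncomputable def alpha12 (a₁ a₂ : ℝ) (f g : ℝ → ℂ) (x : ℝ) : ℂ :=
  ∫ t in (x + (a₁ + a₂) / 2)..π, f t * g (t - x + (a₂ - a₁) / 2)

noncomputable def alpha21 (a₁ a₂ : ℝ) (f g : ℝ → ℂ) (x : ℝ) : ℂ :=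
  ∫ t in (x + (a₁ + a₂) / 2)..π, f t * g (t - x - (a₂ - a₁) / 2)

noncomputable def Kfun (a₁ a₂ : ℝ) (m : ℕ) (p₁ p₂ q₁ q₂ : ℝ → ℂ) (x : ℝ) : ℂ :=
  (-1 : ℂ) ^ m * p₁ (x + a₁ / 2) + q₁ (x + a₂ / 2)
    - (alpha1 a₁ p₁ p₂ x - alpha1 a₁ p₂ p₁ x) * (Ioo a₁ (π - a₁)).indicator 1 x
    - (alpha2 a₂ q₁ q₂ x - alpha2 a₂ q₂ q₁ x) * (Ioo a₂ (π - a₂)).indicator 1 x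
    + (-1 : ℂ) ^ m *
        (alpha12 a₁ a₂ p₂ q₁ x - alpha12 a₁ a₂ p₁ q₂ x
          + alpha21 a₁ a₂ q₂ p₁ x - alpha21 a₁ a₂ q₁ p₂ x) *
        (Ioo ((a₁ + a₂) / 2) (π - (a₁ + a₂) / 2)).indicator 1 x

noncomputable def Gfun (a₁ a₂ : ℝ) (m : ℕ) (p₁ p₂ q₁ q₂ : ℝ → ℂ) (x : ℝ) : ℂ :=
  (-1 : ℂ) ^ m * p₂ (x + a₁ / 2) + q₂ (x + a₂ / 2)
    - (alpha1 a₁ p₁ p₁ x + alpha1 a₁ p₂ p₂ x) * (Ioo a₁ (π - a₁)).indicator 1 x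
    - (alpha2 a₂ q₁ q₁ x + alpha2 a₂ q₂ q₂ x) * (Ioo a₂ (π - a₂)).indicator 1 x
    - (-1 : ℂ) ^ m *
        (alpha12 a₁ a₂ p₁ q₁ x + alpha12 a₁ a₂ p₂ q₂ x
          + alpha21 a₁ a₂ q₁ p₁ x + alpha21 a₁ a₂ q₂ p₂ x) *
        (Ioo ((a₁ + a₂) / 2) (π - (a₁ + a₂) / 2)).indicator 1 x

noncomputable def Delta1 (a₁ a₂ : ℝ) (m : ℕ) (p₁ p₂ q₁ q₂ : ℝ → ℂ) (lam : ℂ) : ℂ :=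
  Complex.sin (π * lam)
    + (∫ x in (a₁ / 2)..(π - a₁ / 2),
        Kfun a₁ a₂ m p₁ p₂ q₁ q₂ x * Complex.cos (lam * ((π - 2 * x : ℝ) : ℂ)))
    - ∫ x in (a₁ / 2)..(π - a₁ / 2),
        Gfun a₁ a₂ m p₁ p₂ q₁ q₂ x * Complex.sin (lam * ((π - 2 * x : ℝ) : ℂ))

noncomputable def Delta2 (a₁ a₂ : ℝ) (m : ℕ) (p₁ p₂ q₁ q₂ : ℝ → ℂ) (lam : ℂ) : ℂ :=
  -Complex.cos (π * lam)
    + (∫ x in (a₁ / 2)..(π - a₁ / 2),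
        Kfun a₁ a₂ m p₁ p₂ q₁ q₂ x * Complex.sin (lam * ((π - 2 * x : ℝ) : ℂ)))
    + ∫ x in (a₁ / 2)..(π - a₁ / 2),
        Gfun a₁ a₂ m p₁ p₂ q₁ q₂ x * Complex.cos (lam * ((π - 2 * x : ℝ) : ℂ))

/-!
Each `α` is the correlation `∫ f t * g (t - s) dt` restricted to a tail, with `s` a shift of `x`.
Split `p₂ = q₂ + H`, where `q₂` is the part on `(a₁ + a₂/2, π - a₁)` and `H` is `h` on
`(2a₁ + a₂/2, π)`. For a shift `s` above `a₁` the only product of the two parts that survives is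
`H t * q₂ (t - s)`, and its integral is `M(q₂)(s + a₂/2) = q₂(s + a₂/2)`. Hence `α¹[p₂, p₂](x)`
cancels `q₂(x + a₂/2)` and `α¹²[p₂, q₂](x)` cancels the `q₂` part of `p₂(x + a₁/2)`, while
`α²[q₂, q₂]` and `α²¹[q₂, p₂]` vanish because their shifts exceed `a₂`. What remains of `G^m` is
`(-1)^m H(x + a₁/2)`.
-/

section Indicator

lemma mul_indicator_one_eq {α R : Type*} [MulZeroOneClass R] {S : Set α} {x : α} {F G : R}
    (hmem : x ∈ S → F = G) (hnotMem : x ∉ S → G = 0) : F * S.indicator 1 x = G := by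
  by_cases hx : x ∈ S
  · simp [hx, hmem hx]
  · simp [hx, hnotMem hx]

variable {E : Type*} [NormedAddCommGroup E] [NormedSpace ℝ E] {μ : Measure ℝ} [NullSingletonClass μ]

lemma integral_indicator_Ioo {a b : ℝ} (hab : a ≤ b) (f : ℝ → E) :
    ∫ x, (Ioo a b).indicator f x ∂μ = ∫ x in a..b, f x ∂μ := by
  rw [integral_indicator measurableSet_Ioo, intervalIntegral.integral_of_le hab,
    integral_Ioc_eq_integral_Ioo]

lemma intervalIntegral_indicator_Ioo {a b c : ℝ} (hac : a ≤ c) (hcb : c ≤ b) (f : ℝ → E) :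
    ∫ x in a..b, (Ioo c b).indicator f x ∂μ = ∫ x in c..b, f x ∂μ := by
  rw [intervalIntegral.integral_eq_integral_of_support_subset, integral_indicator_Ioo hcb]
  exact support_indicator_subset.trans fun x hx ↦ ⟨hac.trans_lt hx.1, hx.2.le⟩

end Indicator

section Correlation

lemma alpha12_eq_alpha1 (a₁ a₂ : ℝ) (f g : ℝ → ℂ) (x : ℝ) :
    alpha12 a₁ a₂ f g x = alpha1 a₂ f g (x - (a₂ - a₁) / 2) := by
  have hlower : x - (a₂ - a₁) / 2 + a₂ = x + (a₁ + a₂) / 2 := by ring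
  simp only [alpha12, alpha1, hlower, sub_add]

lemma alpha21_eq_alpha1 (a₁ a₂ : ℝ) (f g : ℝ → ℂ) (x : ℝ) :
    alpha21 a₁ a₂ f g x = alpha1 a₁ f g (x + (a₂ - a₁) / 2) := by
  have hlower : x + (a₂ - a₁) / 2 + a₁ = x + (a₁ + a₂) / 2 := by ring
  simp only [alpha21, alpha1, hlower, sub_sub]

lemma alpha1_eq_integral {f g : ℝ → ℂ} {c : ℝ} (hf : Function.support f ⊆ Iic π)
    (hg : Function.support g ⊆ Ioi c) (s : ℝ) :
    alpha1 c f g s = ∫ t, f t * g (t - s) := by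
  refine intervalIntegral.integral_eq_integral_of_support_subset fun t ht ↦ ⟨?_, ?_⟩
  · linarith [mem_Ioi.1 (hg (right_ne_zero_of_mul ht))]
  · exact hf (left_ne_zero_of_mul ht)

lemma mul_comp_sub_eq_zero {R : Type*} [MulZeroClass R] {f g : ℝ → R} {b B s : ℝ}
    (hf : Function.support f ⊆ Iio B) (hg : Function.support g ⊆ Ioi b) (hs : B ≤ s + b) (t : ℝ) :
    f t * g (t - s) = 0 := by
  by_contra ht
  linarith [mem_Iio.1 (hf (left_ne_zero_of_mul ht)), mem_Ioi.1 (hg (right_ne_zero_of_mul ht))]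

end Correlation

/-- The operator `M` of the paper, for complex-valued functions. -/
noncomputable def opM (a₁ a₂ : ℝ) (h f : ℝ → ℂ) (x : ℝ) : ℂ :=
  ∫ t in (a₁ + a₂ / 2)..(π - x + a₂ / 2), f t * h (t + x - a₂ / 2)

lemma opM_const_mul (a₁ a₂ : ℝ) (h f : ℝ → ℂ) (β : ℂ) (x : ℝ) :
    opM a₁ a₂ h (fun t ↦ β * f t) x = β * opM a₁ a₂ h f x := by
  simp only [opM, mul_assoc, intervalIntegral.integral_const_mul]

lemma opM_ofReal (a₁ a₂ : ℝ) (h f : ℝ → ℝ) (x : ℝ) :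
    opM a₁ a₂ (fun t ↦ (h t : ℂ)) (fun t ↦ (f t : ℂ)) x =
      ((∫ t in (a₁ + a₂ / 2)..(π - x + a₂ / 2), f t * h (t + x - a₂ / 2) : ℝ) : ℂ) := by
  simp only [opM, ← Complex.ofReal_mul, intervalIntegral.integral_ofReal]

/-- The potential `q₂` built from `e`; the paper's `q₂^β` is the case `e = β * e₁`. -/
noncomputable def qPotential (a₁ a₂ : ℝ) (e : ℝ → ℂ) : ℝ → ℂ :=
  (Ioo (a₁ + a₂ / 2) (π - a₁)).indicator e

/-- The part of `p₂` that does not depend on `β`: the kernel `h` of `M`, cut off to the interval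
where it is prescribed. -/
noncomputable def kernelPart (a₁ a₂ : ℝ) (h : ℝ → ℂ) : ℝ → ℂ :=
  (Ioo (2 * a₁ + a₂ / 2) π).indicator h

/-- The potential `p₂` built from `h` and `e`; the paper's `p₂^β` is the case `e = β * e₁`. -/
noncomputable def pPotential (a₁ a₂ : ℝ) (h e : ℝ → ℂ) : ℝ → ℂ :=
  qPotential a₁ a₂ e + kernelPart a₁ a₂ h

section Potentials

variable {a₁ a₂ : ℝ} {h e : ℝ → ℂ}

lemma support_qPotential_subset_Iio : Function.support (qPotential a₁ a₂ e) ⊆ Iio (π - a₁) :=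
  support_indicator_subset.trans Ioo_subset_Iio_self

lemma support_qPotential_subset_Ioi : Function.support (qPotential a₁ a₂ e) ⊆ Ioi (a₁ + a₂ / 2) :=
  support_indicator_subset.trans Ioo_subset_Ioi_self

lemma support_kernelPart_subset_Iio : Function.support (kernelPart a₁ a₂ h) ⊆ Iio π :=
  support_indicator_subset.trans Ioo_subset_Iio_self

lemma support_kernelPart_subset_Ioi :
    Function.support (kernelPart a₁ a₂ h) ⊆ Ioi (2 * a₁ + a₂ / 2) :=
  support_indicator_subset.trans Ioo_subset_Ioi_self

lemma support_pPotential_subset_Ioi (ha₁ : 0 ≤ a₁) :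
    Function.support (pPotential a₁ a₂ h e) ⊆ Ioi (a₁ + a₂ / 2) :=
  (Function.support_add _ _).trans <| union_subset support_qPotential_subset_Ioi <|
    support_kernelPart_subset_Ioi.trans <| Ioi_subset_Ioi <| by linarith

lemma eq_pPotential_of_ite {p : ℝ → ℂ} (hdisj : π ≤ 3 * a₁ + a₂ / 2)
    (hp : ∀ x, p x = if x ∈ Ioo (a₁ + a₂ / 2) (π - a₁) then e x
      else if x ∈ Ioo (2 * a₁ + a₂ / 2) π then h x else 0) :
    p = pPotential a₁ a₂ h e := by
  funext x
  rw [hp, pPotential, Pi.add_apply, qPotential, kernelPart, indicator_apply, indicator_apply]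
  split_ifs with hI hJ hJ
  · linarith [hI.2, hJ.1]
  all_goals simp

lemma pPotential_mul_qPotential_comp_sub (hdisj : π ≤ 3 * a₁ + a₂ / 2) {s : ℝ} (hs : a₁ ≤ s)
    (t : ℝ) :
    pPotential a₁ a₂ h e t * qPotential a₁ a₂ e (t - s) =
      kernelPart a₁ a₂ h t * qPotential a₁ a₂ e (t - s) := by
  rw [pPotential, Pi.add_apply, add_mul, mul_comp_sub_eq_zero support_qPotential_subset_Iio
    support_qPotential_subset_Ioi (by linarith), zero_add]

lemma pPotential_mul_pPotential_comp_sub (ha₁ : 0 ≤ a₁) (hdisj : π ≤ 3 * a₁ + a₂ / 2) {s : ℝ}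
    (hs : a₁ ≤ s) (t : ℝ) :
    pPotential a₁ a₂ h e t * pPotential a₁ a₂ h e (t - s) =
      kernelPart a₁ a₂ h t * qPotential a₁ a₂ e (t - s) := by
  have hqp : qPotential a₁ a₂ e t * pPotential a₁ a₂ h e (t - s) = 0 :=
    mul_comp_sub_eq_zero support_qPotential_subset_Iio (support_pPotential_subset_Ioi ha₁)
      (by linarith) t
  have hkk : kernelPart a₁ a₂ h t * kernelPart a₁ a₂ h (t - s) = 0 :=
    mul_comp_sub_eq_zero support_kernelPart_subset_Iio support_kernelPart_subset_Ioi
      (by linarith) t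
  simp only [pPotential, Pi.add_apply] at hqp ⊢
  linear_combination hqp + hkk

lemma integral_kernelPart_mul_qPotential_comp_sub {s : ℝ} (hs : a₁ ≤ s)
    (hsπ : s + (a₁ + a₂ / 2) ≤ π) :
    ∫ t, kernelPart a₁ a₂ h t * qPotential a₁ a₂ e (t - s) = opM a₁ a₂ h e (s + a₂ / 2) := by
  have hinter : Ioo (a₁ + a₂ / 2) (π - a₁) ∩ (· + s) ⁻¹' Ioo (2 * a₁ + a₂ / 2) π =
      Ioo (a₁ + a₂ / 2) (π - s) := by
    ext u
    simp only [mem_inter_iff, mem_preimage, mem_Ioo]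
    constructor
    · rintro ⟨⟨h₁, -⟩, -, h₂⟩
      exact ⟨h₁, by linarith⟩
    · rintro ⟨h₁, h₂⟩
      exact ⟨⟨h₁, by linarith⟩, by linarith, by linarith⟩
  calc ∫ t, kernelPart a₁ a₂ h t * qPotential a₁ a₂ e (t - s)
      = ∫ u, qPotential a₁ a₂ e u * kernelPart a₁ a₂ h (u + s) := by
        rw [← integral_add_right_eq_self _ s]
        simp only [add_sub_cancel_right, mul_comm]
    _ = ∫ u, (Ioo (a₁ + a₂ / 2) (π - s)).indicator (fun u ↦ e u * h (u + s)) u := by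
        simp only [← hinter, inter_indicator_mul]
        rfl
    _ = ∫ u in (a₁ + a₂ / 2)..(π - s), e u * h (u + s) :=
        integral_indicator_Ioo (by linarith) _
    _ = opM a₁ a₂ h e (s + a₂ / 2) := by
        simp only [opM, sub_add_eq_sub_sub, sub_add_cancel, ← add_assoc, add_sub_cancel_right]

lemma alpha1_kernelPart_qPotential {c s : ℝ} (hc : c ≤ a₁ + a₂ / 2) (hs : a₁ < s)
    (hfix : s + a₂ / 2 ∈ Ioo (a₁ + a₂ / 2) (π - a₁) →
      opM a₁ a₂ h e (s + a₂ / 2) = e (s + a₂ / 2)) :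
    alpha1 c (kernelPart a₁ a₂ h) (qPotential a₁ a₂ e) s = qPotential a₁ a₂ e (s + a₂ / 2) := by
  rw [alpha1_eq_integral (support_kernelPart_subset_Iio.trans Iio_subset_Iic_self)
    (support_qPotential_subset_Ioi.trans (Ioi_subset_Ioi hc))]
  by_cases hmem : s + a₂ / 2 ∈ Ioo (a₁ + a₂ / 2) (π - a₁)
  · rw [integral_kernelPart_mul_qPotential_comp_sub hs.le (by linarith [hmem.2]), hfix hmem,
      qPotential, indicator_of_mem hmem]
  · have hsπ : π ≤ s + (a₁ + a₂ / 2) := by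
      by_contra! hlt
      exact hmem ⟨by linarith, by linarith⟩
    rw [qPotential, indicator_of_notMem hmem]
    exact integral_eq_zero_of_ae <| .of_forall <|
      mul_comp_sub_eq_zero support_kernelPart_subset_Iio support_qPotential_subset_Ioi hsπ

lemma alpha1_pPotential_pPotential_mul_indicator (ha₁ : 0 ≤ a₁) (ha₂ : 0 ≤ a₂)
    (hdisj : π ≤ 3 * a₁ + a₂ / 2) {x : ℝ}
    (hfix : x + a₂ / 2 ∈ Ioo (a₁ + a₂ / 2) (π - a₁) →
      opM a₁ a₂ h e (x + a₂ / 2) = e (x + a₂ / 2)) :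
    alpha1 a₁ (pPotential a₁ a₂ h e) (pPotential a₁ a₂ h e) x *
      (Ioo a₁ (π - a₁)).indicator 1 x = qPotential a₁ a₂ e (x + a₂ / 2) := by
  refine mul_indicator_one_eq (fun hx ↦ ?_) fun hx ↦ indicator_of_notMem (fun hmem ↦ hx ?_) _
  · rw [← alpha1_kernelPart_qPotential (c := a₁) (by linarith) hx.1 hfix]
    simp only [alpha1, pPotential_mul_pPotential_comp_sub ha₁ hdisj hx.1.le]
  · exact ⟨by linarith [hmem.1], by linarith [hmem.2]⟩

lemma alpha12_pPotential_qPotential_mul_indicator (ha : a₂ ≤ 2 * a₁)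
    (hdisj : π ≤ 3 * a₁ + a₂ / 2) {x : ℝ}
    (hfix : x + a₁ / 2 ∈ Ioo (a₁ + a₂ / 2) (π - a₁) →
      opM a₁ a₂ h e (x + a₁ / 2) = e (x + a₁ / 2)) :
    alpha12 a₁ a₂ (pPotential a₁ a₂ h e) (qPotential a₁ a₂ e) x *
      (Ioo ((a₁ + a₂) / 2) (π - (a₁ + a₂) / 2)).indicator 1 x =
        qPotential a₁ a₂ e (x + a₁ / 2) := by
  refine mul_indicator_one_eq (fun hx ↦ ?_) fun hx ↦ indicator_of_notMem (fun hmem ↦ hx ?_) _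
  · have hs : a₁ < x - (a₂ - a₁) / 2 := by linarith [hx.1]
    have hshift : x + a₁ / 2 = x - (a₂ - a₁) / 2 + a₂ / 2 := by ring
    rw [hshift] at hfix ⊢
    rw [alpha12_eq_alpha1, ← alpha1_kernelPart_qPotential (c := a₂) (by linarith) hs hfix]
    simp only [alpha1, pPotential_mul_qPotential_comp_sub hdisj hs.le]
  · exact ⟨by linarith [hmem.1], by linarith [hmem.2]⟩

lemma alpha2_qPotential_qPotential_mul_indicator (hsum : π ≤ 2 * a₁ + 3 * a₂ / 2) (x : ℝ) :
    alpha2 a₂ (qPotential a₁ a₂ e) (qPotential a₁ a₂ e) x *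
      (Ioo a₂ (π - a₂)).indicator 1 x = 0 := by
  refine mul_indicator_one_eq (fun hx ↦ ?_) fun _ ↦ rfl
  simp only [alpha2, mul_comp_sub_eq_zero support_qPotential_subset_Iio
    support_qPotential_subset_Ioi (show π - a₁ ≤ x + (a₁ + a₂ / 2) by linarith [hx.1]),
    intervalIntegral.integral_zero]

lemma alpha21_qPotential_pPotential_mul_indicator (ha₁ : 0 ≤ a₁)
    (hsum : π ≤ 2 * a₁ + 3 * a₂ / 2) (x : ℝ) :
    alpha21 a₁ a₂ (qPotential a₁ a₂ e) (pPotential a₁ a₂ h e) x *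
      (Ioo ((a₁ + a₂) / 2) (π - (a₁ + a₂) / 2)).indicator 1 x = 0 := by
  refine mul_indicator_one_eq (fun hx ↦ ?_) fun _ ↦ rfl
  have hs : π - a₁ ≤ x + (a₂ - a₁) / 2 + (a₁ + a₂ / 2) := by linarith [hx.1]
  simp only [alpha21_eq_alpha1, alpha1, mul_comp_sub_eq_zero support_qPotential_subset_Iio
    (support_pPotential_subset_Ioi ha₁) hs, intervalIntegral.integral_zero]

end Potentials

section CharacteristicFunctions

variable {a₁ a₂ : ℝ} {h e : ℝ → ℂ}

lemma Kfun_zero_zero (a₁ a₂ : ℝ) (m : ℕ) (p q : ℝ → ℂ) : Kfun a₁ a₂ m 0 p 0 q = 0 := by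
  funext x
  simp [Kfun, alpha1, alpha2, alpha12, alpha21]

lemma Gfun_pPotential_qPotential (ha₁ : 0 ≤ a₁) (ha₂ : 0 ≤ a₂) (ha : a₂ ≤ 2 * a₁)
    (hdisj : π ≤ 3 * a₁ + a₂ / 2) (hsum : π ≤ 2 * a₁ + 3 * a₂ / 2) (m : ℕ) {x : ℝ}
    (hfix₁ : x + a₁ / 2 ∈ Ioo (a₁ + a₂ / 2) (π - a₁) →
      opM a₁ a₂ h e (x + a₁ / 2) = e (x + a₁ / 2))
    (hfix₂ : x + a₂ / 2 ∈ Ioo (a₁ + a₂ / 2) (π - a₁) →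
      opM a₁ a₂ h e (x + a₂ / 2) = e (x + a₂ / 2)) :
    Gfun a₁ a₂ m 0 (pPotential a₁ a₂ h e) 0 (qPotential a₁ a₂ e) x =
      (-1) ^ m * kernelPart a₁ a₂ h (x + a₁ / 2) := by
  have hp : pPotential a₁ a₂ h e (x + a₁ / 2) =
      qPotential a₁ a₂ e (x + a₁ / 2) + kernelPart a₁ a₂ h (x + a₁ / 2) := rfl
  have hα₁ := alpha1_pPotential_pPotential_mul_indicator ha₁ ha₂ hdisj hfix₂
  have hα₂ := alpha2_qPotential_qPotential_mul_indicator (e := e) hsum x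
  have hα₁₂ := alpha12_pPotential_qPotential_mul_indicator ha hdisj hfix₁
  have hα₂₁ := alpha21_qPotential_pPotential_mul_indicator (h := h) (e := e) ha₁ hsum x
  simp only [Gfun, alpha1, alpha2, alpha12, alpha21, Pi.zero_apply, zero_mul,
    intervalIntegral.integral_zero, zero_add] at hα₁ hα₂ hα₁₂ hα₂₁ ⊢
  linear_combination (-1) ^ m * hp - hα₁ - hα₂ - (-1) ^ m * hα₁₂ - (-1) ^ m * hα₂₁

lemma Gfun_pPotential_qPotential_ae_eq (ha : a₂ ≤ 2 * a₁) (hdisj : π ≤ 3 * a₁ + a₂ / 2)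
    (hsum : π ≤ 2 * a₁ + 3 * a₂ / 2) (hle : 2 * a₁ + a₂ / 2 ≤ π)
    (hfix : ∀ᵐ x ∂volume.restrict (Ioo (a₁ + a₂ / 2) (π - a₁)), opM a₁ a₂ h e x = e x) (m : ℕ) :
    Gfun a₁ a₂ m 0 (pPotential a₁ a₂ h e) 0 (qPotential a₁ a₂ e) =ᵐ[volume]
      fun x ↦ (-1) ^ m * kernelPart a₁ a₂ h (x + a₁ / 2) := by
  rw [ae_restrict_iff' measurableSet_Ioo] at hfix
  have hfix_add (a : ℝ) := (quasiMeasurePreserving_add_right volume a).ae hfix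
  filter_upwards [hfix_add (a₁ / 2), hfix_add (a₂ / 2)] with x hfix₁ hfix₂
  exact Gfun_pPotential_qPotential (by linarith) (by linarith) ha hdisj hsum m hfix₁ hfix₂

lemma integral_Gfun_mul (ha : a₂ ≤ 2 * a₁) (hdisj : π ≤ 3 * a₁ + a₂ / 2)
    (hsum : π ≤ 2 * a₁ + 3 * a₂ / 2) (hle : 2 * a₁ + a₂ / 2 ≤ π)
    (hfix : ∀ᵐ x ∂volume.restrict (Ioo (a₁ + a₂ / 2) (π - a₁)), opM a₁ a₂ h e x = e x) (m : ℕ)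
    (φ : ℝ → ℂ) :
    ∫ x in (a₁ / 2)..(π - a₁ / 2),
        Gfun a₁ a₂ m 0 (pPotential a₁ a₂ h e) 0 (qPotential a₁ a₂ e) x * φ (π - 2 * x) =
      (-1) ^ m * ∫ x in (2 * a₁ + a₂ / 2)..π, h x * φ (π - 2 * x + a₁) := by
  calc _ = ∫ x in (a₁ / 2)..(π - a₁ / 2), (-1) ^ m *
          (kernelPart a₁ a₂ h (x + a₁ / 2) * φ (π - 2 * (x + a₁ / 2) + a₁)) := by
        refine intervalIntegral.integral_congr_ae ?_
        filter_upwards [Gfun_pPotential_qPotential_ae_eq ha hdisj hsum hle hfix m] with x hx _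
        rw [hx, mul_assoc, show π - 2 * (x + a₁ / 2) + a₁ = π - 2 * x by ring]
    _ = (-1) ^ m * ∫ x in a₁..π, kernelPart a₁ a₂ h x * φ (π - 2 * x + a₁) := by
        rw [intervalIntegral.integral_const_mul, intervalIntegral.integral_comp_add_right
          (fun x ↦ kernelPart a₁ a₂ h x * φ (π - 2 * x + a₁)), add_halves, sub_add_cancel]
    _ = _ := by
        simp only [kernelPart, ← indicator_mul_left (g := fun x ↦ φ (π - 2 * x + a₁))]
        rw [intervalIntegral_indicator_Ioo (by linarith) hle]

theorem Delta1_pPotential_qPotential (ha : a₂ ≤ 2 * a₁) (hdisj : π ≤ 3 * a₁ + a₂ / 2)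
    (hsum : π ≤ 2 * a₁ + 3 * a₂ / 2) (hle : 2 * a₁ + a₂ / 2 ≤ π)
    (hfix : ∀ᵐ x ∂volume.restrict (Ioo (a₁ + a₂ / 2) (π - a₁)), opM a₁ a₂ h e x = e x) (m : ℕ)
    (lam : ℂ) :
    Delta1 a₁ a₂ m 0 (pPotential a₁ a₂ h e) 0 (qPotential a₁ a₂ e) lam =
      Complex.sin (π * lam) - (-1) ^ m * ∫ x in (2 * a₁ + a₂ / 2)..π,
        h x * Complex.sin (lam * ((π - 2 * x + a₁ : ℝ) : ℂ)) := by
  rw [Delta1, integral_Gfun_mul ha hdisj hsum hle hfix m fun u ↦ Complex.sin (lam * u)]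
  simp only [Kfun_zero_zero, Pi.zero_apply, zero_mul, intervalIntegral.integral_zero, add_zero]

theorem Delta2_pPotential_qPotential (ha : a₂ ≤ 2 * a₁) (hdisj : π ≤ 3 * a₁ + a₂ / 2)
    (hsum : π ≤ 2 * a₁ + 3 * a₂ / 2) (hle : 2 * a₁ + a₂ / 2 ≤ π)
    (hfix : ∀ᵐ x ∂volume.restrict (Ioo (a₁ + a₂ / 2) (π - a₁)), opM a₁ a₂ h e x = e x) (m : ℕ)
    (lam : ℂ) :
    Delta2 a₁ a₂ m 0 (pPotential a₁ a₂ h e) 0 (qPotential a₁ a₂ e) lam =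
      -Complex.cos (π * lam) + (-1) ^ m * ∫ x in (2 * a₁ + a₂ / 2)..π,
        h x * Complex.cos (lam * ((π - 2 * x + a₁ : ℝ) : ℂ)) := by
  rw [Delta2, integral_Gfun_mul ha hdisj hsum hle hfix m fun u ↦ Complex.cos (lam * u)]
  simp only [Kfun_zero_zero, Pi.zero_apply, zero_mul, intervalIntegral.integral_zero, add_zero]

end CharacteristicFunctions

theorem characteristic_functions_independent_of_beta_general {a₁ a₂ : ℝ}
    (ha : a₂ ≤ 2 * a₁) (hdisj : π ≤ 3 * a₁ + a₂ / 2) (hsum : π ≤ 2 * a₁ + 3 * a₂ / 2)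
    (hle : 2 * a₁ + a₂ / 2 ≤ π) (h e₁ : ℝ → ℂ)
    (heig : ∀ᵐ x ∂volume.restrict (Ioo (a₁ + a₂ / 2) (π - a₁)), opM a₁ a₂ h e₁ x = e₁ x)
    (p₂ q₂ : ℂ → ℝ → ℂ)
    (hp₂ : ∀ β x, p₂ β x = if x ∈ Ioo (a₁ + a₂ / 2) (π - a₁) then β * e₁ x
      else if x ∈ Ioo (2 * a₁ + a₂ / 2) π then h x else 0)
    (hq₂ : ∀ β x, q₂ β x = if x ∈ Ioo (a₁ + a₂ / 2) (π - a₁) then β * e₁ x else 0) :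
    (∀ (β : ℂ) (m : ℕ) (lam : ℂ),
      Delta1 a₁ a₂ m 0 (p₂ β) 0 (q₂ β) lam =
          Complex.sin (π * lam) - (-1) ^ m * ∫ x in (2 * a₁ + a₂ / 2)..π,
            h x * Complex.sin (lam * ((π - 2 * x + a₁ : ℝ) : ℂ)) ∧
      Delta2 a₁ a₂ m 0 (p₂ β) 0 (q₂ β) lam =
          -Complex.cos (π * lam) + (-1) ^ m * ∫ x in (2 * a₁ + a₂ / 2)..π,
            h x * Complex.cos (lam * ((π - 2 * x + a₁ : ℝ) : ℂ))) ∧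
    (∀ (β β' : ℂ) (m : ℕ) (lam : ℂ),
      (Delta1 a₁ a₂ m 0 (p₂ β) 0 (q₂ β) lam = 0 ↔
        Delta1 a₁ a₂ m 0 (p₂ β') 0 (q₂ β') lam = 0) ∧
      (Delta2 a₁ a₂ m 0 (p₂ β) 0 (q₂ β) lam = 0 ↔
        Delta2 a₁ a₂ m 0 (p₂ β') 0 (q₂ β') lam = 0)) := by
  have hp (β : ℂ) := eq_pPotential_of_ite hdisj (hp₂ β)
  have hq (β : ℂ) : q₂ β = qPotential a₁ a₂ (fun x ↦ β * e₁ x) := by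
    funext x
    rw [hq₂, qPotential, indicator_apply]
  have hfix (β : ℂ) : ∀ᵐ x ∂volume.restrict (Ioo (a₁ + a₂ / 2) (π - a₁)),
      opM a₁ a₂ h (fun t ↦ β * e₁ t) x = β * e₁ x :=
    heig.mono fun x hx ↦ by rw [opM_const_mul, hx]
  simp only [hp, hq, Delta1_pPotential_qPotential ha hdisj hsum hle (hfix _),
    Delta2_pPotential_qPotential ha hdisj hsum hle (hfix _), and_self, implies_true]

/-- For the family `p₁ = q₁ = 0`, `p₂ = p₂^β`, `q₂ = q₂^β`, the characteristic functions
`Δ₁^m` and `Δ₂^m` have the stated explicit form involving only `h`, hence are independent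
of `β`; in particular their zero sets (the spectra of `D_j(P_β,Q_β,m)`) do not depend
on `β`. -/
theorem characteristic_functions_independent_of_beta (a₁ a₂ : ℝ)
    (ha₁ : π / 3 ≤ a₁) (ha₁' : a₁ < 2 * π / 5)
    (ha₂ : π / 3 ≤ a₂) (ha₂' : a₂ < 2 * π / 3)
    (ha : a₁ < a₂) (hlt : 2 * a₁ + a₂ / 2 < π)
    (h e₁ : ℝ → ℝ)
    (hh : MemLp h 2 (volume.restrict (Ioo 0 π)))
    (hhne : ¬ (∀ᵐ x ∂(volume.restrict (Ioo 0 π)), h x = 0))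
    (hh0 : ∀ᵐ x ∂(volume : Measure ℝ), x ∉ Ioo (2 * a₁ + a₂ / 2) π → h x = 0)
    (he₁ : MemLp e₁ 2 (volume.restrict (Ioo (a₁ + a₂ / 2) (π - a₁))))
    (heig : ∀ᵐ x ∂(volume.restrict (Ioo (a₁ + a₂ / 2) (π - a₁))),
      (∫ t in (a₁ + a₂ / 2)..(π - x + a₂ / 2), e₁ t * h (t + x - a₂ / 2)) = e₁ x)
    (p₂ q₂ : ℂ → ℝ → ℂ)
    (hp₂ : ∀ β x, p₂ β x =
      if x ∈ Ioo (a₁ + a₂ / 2) (π - a₁) then β * (e₁ x : ℂ)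
      else if x ∈ Ioo (2 * a₁ + a₂ / 2) π then (h x : ℂ) else 0)
    (hq₂ : ∀ β x, q₂ β x =
      if x ∈ Ioo (a₁ + a₂ / 2) (π - a₁) then β * (e₁ x : ℂ) else 0) :
    (∀ (β : ℂ) (m : ℕ), m = 0 ∨ m = 1 → ∀ lam : ℂ,
      Delta1 a₁ a₂ m 0 (p₂ β) 0 (q₂ β) lam
          = Complex.sin (π * lam)
            - (-1 : ℂ) ^ m * ∫ x in (2 * a₁ + a₂ / 2)..π,
                (h x : ℂ) * Complex.sin (lam * ((π - 2 * x + a₁ : ℝ) : ℂ)) ∧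
      Delta2 a₁ a₂ m 0 (p₂ β) 0 (q₂ β) lam
          = -Complex.cos (π * lam)
            + (-1 : ℂ) ^ m * ∫ x in (2 * a₁ + a₂ / 2)..π,
                (h x : ℂ) * Complex.cos (lam * ((π - 2 * x + a₁ : ℝ) : ℂ))) ∧
    (∀ (β β' : ℂ) (m : ℕ), m = 0 ∨ m = 1 → ∀ lam : ℂ,
      (Delta1 a₁ a₂ m 0 (p₂ β) 0 (q₂ β) lam = 0 ↔
        Delta1 a₁ a₂ m 0 (p₂ β') 0 (q₂ β') lam = 0) ∧
      (Delta2 a₁ a₂ m 0 (p₂ β) 0 (q₂ β) lam = 0 ↔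
        Delta2 a₁ a₂ m 0 (p₂ β') 0 (q₂ β') lam = 0)) := by
  have hgen := characteristic_functions_independent_of_beta_general (by linarith) (by linarith)
    (by linarith) hlt.le _ _ (heig.mono fun x hx ↦ by rw [opM_ofReal, hx]) p₂ q₂ hp₂ hq₂
  exact ⟨fun β m _ ↦ hgen.1 β m, fun β β' m _ ↦ hgen.2 β β' m⟩
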